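/- arXiv:1312.6292 — 4 statements merged into one kernel-verified Lean document; each statement's English description precedes it below -/
import Mathlib

section
/- Let V₁ and W be finite-dimensional real vector spaces, where W carries a nondegenerate symmetric bilinear form of type (r, r) with r ≤ 5. Let σ : V₁ × V₁ → W be a nonzero flat symmetric bilinear map. If dim N(σ) < dim V₁ − 2r, then S(σ) is a degenerate subspace of W. -/
open Module Submodule

/-- A nondegenerate symmetric bilinear form `B` on `W` has type `(r, q)` if `W` has an
orthogonal basis consisting of `r` vectors of negative square length and `q` vectors of
positive square length. -/
def BilinFormHasType {W : Type*} [AddCommGroup W] [Module ℝ W]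
    (B : LinearMap.BilinForm ℝ W) (r q : ℕ) : Prop :=
  ∃ b : Basis (Fin r ⊕ Fin q) ℝ W,
    (∀ i j, i ≠ j → B (b i) (b j) = 0) ∧
    (∀ i, B (b (Sum.inl i)) (b (Sum.inl i)) < 0) ∧
    (∀ j, 0 < B (b (Sum.inr j)) (b (Sum.inr j)))

/-! Suppose `S(σ)` is nondegenerate. By semicontinuity of the rank along lines, for a generic `X`
the values `σ κ Y` with `κ ∈ ker (σ X)` lie in the radical of the range of `σ X`, and
`σ κ` vanishes on the kernel of the pullback of the form under `σ X`. As `dim S(σ) ≤ 10`, a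
radical of dimension at least four would leave the pullback rank at most two; then `σ κ` would be
determined by the four coefficients of a binary cubic, contradicting the bound on the nullity. So
the radical has dimension at most three, and for a generic second vector `Y` the maps `σ κ` with
`κ` annihilating both `X` and `Y` form a line, spanned by a map of rank one `l ⊗ w` with `w`
isotropic; by flatness `B w (σ Z Z)` is a nonzero multiple of `(l Z) ^ 2`. Here `l` vanishes at
`X` and `Y` but not at a generic third vector, so the six pairs among four generic vectors give
six linearly independent, mutually orthogonal isotropic vectors `w` of `S(σ)`, which forces
`dim S(σ) ≥ 12`. -/

section Generic

open Filter Polynomial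

variable {K V E F : Type*} [Field K] [AddCommGroup V] [Module K V] [AddCommGroup E] [Module K E]
  [AddCommGroup F] [Module K F]

/-- A curve `f : K → E` is polynomial if its coordinates are polynomial functions. Testing
against all linear functionals avoids choosing a basis. -/
def IsPolynomialCurve (f : K → E) : Prop :=
  ∀ φ : Dual K E, ∃ p : K[X], ∀ t, φ (f t) = p.eval t

lemma isPolynomialCurve_quadratic (a b c : E) :
    IsPolynomialCurve fun t : K => a + t • b + t ^ 2 • c := by
  intro φ
  refine ⟨C (φ a) + C (φ b) * X + C (φ c) * X ^ 2, fun t => ?_⟩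
  simp only [map_add, map_smul, smul_eq_mul, eval_add, eval_mul, eval_C, eval_X, eval_pow]
  ring

lemma isPolynomialCurve_affine (a b : E) : IsPolynomialCurve fun t : K => a + t • b := by
  simpa using isPolynomialCurve_quadratic (K := K) a b 0

lemma eventually_cofinite_eval_ne_zero {p : K[X]} {t₀ : K} (h : p.eval t₀ ≠ 0) :
    ∀ᶠ t in cofinite, p.eval t ≠ 0 := by
  have hp : p ≠ 0 := by rintro rfl; simp at h
  simpa [eventually_cofinite] using finite_setOfPred_isRoot hp

lemma eventually_cofinite_injective_of_isPolynomialCurve [FiniteDimensional K E]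
    {A : K → E →ₗ[K] E} (hA : ∀ v, IsPolynomialCurve fun t => A t v) (h₀ : A 0 = LinearMap.id) :
    ∀ᶠ t in cofinite, Function.Injective (A t) := by
  classical
  let b := finBasis K E
  choose p hp using fun i j => hA (b j) (b.coord i)
  have hdet (t : K) : LinearMap.det (A t) = (Matrix.of p).det.eval t := by
    rw [← LinearMap.det_toMatrix b, ← coe_evalRingHom, RingHom.map_det]
    congr 1
    ext i j
    simpa [LinearMap.toMatrix_apply] using hp i j t
  have hdet₀ : (Matrix.of p).det.eval 0 ≠ 0 := by simp [← hdet, h₀]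
  filter_upwards [eventually_cofinite_eval_ne_zero hdet₀] with t ht
  rw [← hdet] at ht
  exact (LinearMap.equivOfDetNeZero _ ht).injective

/-- A family of linear maps parametrized by a vector space is polynomial if it restricts to
polynomial curves on all affine lines of the parameter space. -/
def IsPolynomialFamily (A : V → E →ₗ[K] F) : Prop :=
  ∀ X Z v, IsPolynomialCurve fun t : K => A (X + t • Z) v

lemma isPolynomialFamily_of_linear (A : V →ₗ[K] E →ₗ[K] F) : IsPolynomialFamily A := by
  intro X Z v
  simpa using isPolynomialCurve_affine (K := K) (A X v) (A Z v)

lemma IsPolynomialFamily.eventually_cofinite_finrank_range_le [FiniteDimensional K E]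
    {A : V → E →ₗ[K] F} (hA : IsPolynomialFamily A) (X Z : V) :
    ∀ᶠ t : K in cofinite, finrank K (A X).range ≤ finrank K (A (X + t • Z)).range := by
  obtain ⟨C, hC⟩ := (A X).ker.exists_isCompl
  have hker : ((A X).domRestrict C).ker = ⊥ := by
    rw [LinearMap.ker_domRestrict]
    exact disjoint_iff_comap_eq_bot.1 hC.symm.disjoint
  obtain ⟨π, hπ⟩ := LinearMap.exists_leftInverse_of_injective _ hker
  have hinj := eventually_cofinite_injective_of_isPolynomialCurve
    (A := fun t => π ∘ₗ (A (X + t • Z)).domRestrict C) (fun v φ => hA X Z v (φ ∘ₗ π))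
    (by simpa using hπ)
  have hrank : finrank K (A X).range = finrank K C := by
    have h₁ := (A X).finrank_range_add_finrank_ker
    have h₂ := finrank_add_eq_of_isCompl hC
    omega
  filter_upwards [hinj] with t ht
  rw [hrank, ← LinearMap.finrank_range_of_inj (Function.Injective.of_comp ht)]
  exact Submodule.finrank_mono (LinearMap.range_domRestrict_le_range _ _)

/-- If `w` were outside the image at `X`, then adjoining it would raise the rank at `X`, hence, by
semicontinuity, the rank at some nearby point of the line, where `w` adds nothing. -/
lemma IsPolynomialFamily.mem_range_of_forall_ne_zero [Infinite K] [FiniteDimensional K E]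
    {A : V → E →ₗ[K] F} (hA : IsPolynomialFamily A) {X : V}
    (hmax : ∀ Y, finrank K (A Y).range ≤ finrank K (A X).range) (Z : V) {w : F}
    (hw : ∀ t : K, t ≠ 0 → w ∈ (A (X + t • Z)).range) : w ∈ (A X).range := by
  let A' (Y : V) : E × K →ₗ[K] F := (A Y).coprod (LinearMap.toSpanSingleton K F w)
  have hrange (Y : V) : (A' Y).range = (A Y).range ⊔ span K {w} := by
    rw [LinearMap.range_coprod, LinearMap.range_toSpanSingleton]
  have hA' : IsPolynomialFamily A' := fun Y Y' v φ => by
    obtain ⟨p, hp⟩ := hA Y Y' v.1 φ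
    exact ⟨p + C (v.2 • φ w), fun t => by simp [A', hp]⟩
  obtain ⟨t, ht, ht₀⟩ := ((hA'.eventually_cofinite_finrank_range_le X Z).and
    (eventually_cofinite_ne (0 : K))).exists
  by_contra hwX
  have hlt : finrank K (A X).range < finrank K (A' X).range :=
    finrank_lt_finrank_of_lt (by rw [hrange]; simpa [left_lt_sup] using hwX)
  have hrange_t : (A' (X + t • Z)).range = (A (X + t • Z)).range := by
    rw [hrange, sup_eq_left, span_singleton_le_iff_mem]
    exact hw t ht₀
  rw [hrange_t] at ht
  exact absurd (hlt.trans_le ht) (hmax _).not_gt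

/-- Zariski-openness, tested along affine lines: leaving `s` along a line through a point of `s`
is possible for finitely many parameters only. -/
def IsLineOpen (K : Type*) {V : Type*} [Field K] [AddCommGroup V] [Module K V] (s : Set V) :
    Prop :=
  ∀ X ∈ s, ∀ Z, ∀ᶠ t : K in cofinite, X + t • Z ∈ s

lemma IsPolynomialFamily.isLineOpen_le_finrank_range [FiniteDimensional K E] {A : V → E →ₗ[K] F}
    (hA : IsPolynomialFamily A) (k : ℕ) : IsLineOpen K {X | k ≤ finrank K (A X).range} :=
  fun X hX Z => (hA.eventually_cofinite_finrank_range_le X Z).mono fun _ => le_trans hX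

lemma IsLineOpen.inter {s t : Set V} (hs : IsLineOpen K s) (ht : IsLineOpen K t) :
    IsLineOpen K (s ∩ t) :=
  fun X hX Z => (hs X hX.1 Z).and (ht X hX.2 Z)

lemma IsLineOpen.nonempty_inter [Infinite K] {s t : Set V} (hs : IsLineOpen K s)
    (ht : IsLineOpen K t) (hs' : s.Nonempty) (ht' : t.Nonempty) : (s ∩ t).Nonempty := by
  obtain ⟨X, hX⟩ := hs'
  obtain ⟨Y, hY⟩ := ht'
  have hYX := (sub_right_injective (b := (1 : K))).tendsto_cofinite.eventually (ht Y hY (X - Y))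
  obtain ⟨c, hcs, hct⟩ := ((hs X hX (Y - X)).and hYX).exists
  refine ⟨X + c • (Y - X), hcs, ?_⟩
  convert hct using 1
  module

/-- The filter of generic properties of vectors of `V`, generated by the nonempty line-open sets;
`∀ᶠ X in generic K V, P X` says that a generic `X` satisfies `P`. -/
def generic (K V : Type*) [Field K] [Infinite K] [AddCommGroup V] [Module K V] : Filter V where
  sets := {s | ∃ t ⊆ s, IsLineOpen K t ∧ t.Nonempty}
  univ_sets := ⟨Set.univ, subset_rfl, fun _ _ _ => by simp, Set.univ_nonempty⟩
  sets_of_superset := fun ⟨t, ht, h⟩ hst => ⟨t, ht.trans hst, h⟩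
  inter_sets := fun ⟨t, ht, hopen, hne⟩ ⟨t', ht', hopen', hne'⟩ =>
    ⟨t ∩ t', Set.inter_subset_inter ht ht', hopen.inter hopen',
      hopen.nonempty_inter hopen' hne hne'⟩

variable [Infinite K]

lemma IsLineOpen.eventually_generic {P : V → Prop} (hP : IsLineOpen K {X | P X})
    (hne : ∃ X, P X) : ∀ᶠ X in generic K V, P X :=
  ⟨_, subset_rfl, hP, hne⟩

instance generic_neBot : (generic K V).NeBot :=
  ⟨fun h => by
    obtain ⟨t, ht, -, hne⟩ : ∅ ∈ generic K V := h ▸ mem_bot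
    exact hne.ne_empty (Set.subset_empty_iff.1 ht)⟩

lemma eventually_generic_ne_zero {l : Dual K V} (hl : l ≠ 0) : ∀ᶠ Z in generic K V, l Z ≠ 0 := by
  refine IsLineOpen.eventually_generic (fun X hX Z => ?_) (DFunLike.ne_iff.1 hl)
  obtain ⟨p, hp⟩ := isPolynomialCurve_affine (K := K) X Z l
  have hp₀ : p.eval 0 ≠ 0 := by simpa [← hp] using hX
  simpa [← hp] using eventually_cofinite_eval_ne_zero hp₀

lemma IsPolynomialFamily.eventually_generic_finrank_range_le [FiniteDimensional K E]
    {A : V → E →ₗ[K] F} (hA : IsPolynomialFamily A) :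
    ∀ᶠ X in generic K V, ∀ Y, finrank K (A Y).range ≤ finrank K (A X).range := by
  have hbdd : BddAbove (Set.range fun X => finrank K (A X).range) :=
    ⟨finrank K E, by rintro _ ⟨X, rfl⟩; exact (A X).finrank_range_le⟩
  obtain ⟨X₀, hX₀⟩ := Nat.sSup_mem (Set.range_nonempty _) hbdd
  filter_upwards [(hA.isLineOpen_le_finrank_range _).eventually_generic ⟨X₀, le_rfl⟩] with X hX Y
  exact (le_csSup hbdd ⟨Y, rfl⟩).trans (hX₀.symm.le.trans hX)

end Generic

section FlatBilin

open Filter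

variable {K V W : Type*} [Field K] [AddCommGroup V] [Module K V] [AddCommGroup W] [Module K W]

/-- The span `S(σ)` of the values of a bilinear map `σ`. -/
def imageSpan (σ : V →ₗ[K] V →ₗ[K] W) : Submodule K W :=
  span K {w | ∃ X Y, σ X Y = w}

lemma apply_mem_imageSpan (σ : V →ₗ[K] V →ₗ[K] W) (X Y : V) : σ X Y ∈ imageSpan σ :=
  subset_span ⟨X, Y, rfl⟩

instance finiteDimensional_imageSpan [FiniteDimensional K V] (σ : V →ₗ[K] V →ₗ[K] W) :
    FiniteDimensional K (imageSpan σ) := by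
  have h : imageSpan σ = map₂ σ ⊤ ⊤ := by
    rw [map₂_eq_span_image2, imageSpan]
    simp [Set.image2]
  rw [h]
  exact .of_fg (.map₂ σ .of_finite .of_finite)

/-- The radical of the form `B` restricted to the range of a linear map. -/
def rangeRadical (B : LinearMap.BilinForm K W) (A : V →ₗ[K] W) : Submodule K W :=
  A.range ⊓ B.orthogonal A.range

/-- The common zero set `{κ | σ κ X = 0 for all X ∈ s}`. -/
def jointKernel (σ : V →ₗ[K] V →ₗ[K] W) (s : Set V) : Submodule K V :=
  ⨅ X ∈ s, (σ.flip X).ker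

lemma mem_jointKernel {σ : V →ₗ[K] V →ₗ[K] W} {s : Set V} {κ : V} :
    κ ∈ jointKernel σ s ↔ ∀ X ∈ s, σ κ X = 0 := by
  simp [jointKernel]

variable {B : LinearMap.BilinForm K W}

lemma finrank_add_finrank_le_of_le_orthogonal {S T U : Submodule K W} [FiniteDimensional K S]
    (hB : B.IsSymm) (hS : Disjoint S (B.orthogonal S)) (hT : T ≤ S) (hU : U ≤ S)
    (hTU : U ≤ B.orthogonal T) : finrank K T + finrank K U ≤ finrank K S := by
  have hnd := B.nondegenerate_restrict_of_disjoint_orthogonal hB.isRefl hS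
  have hle : U.comap S.subtype ≤ (B.restrict S).orthogonal (T.comap S.subtype) :=
    fun u hu t ht => hTU hu t ht
  have h₁ := finrank_mono hle
  rw [LinearMap.BilinForm.finrank_orthogonal hnd,
    (comapSubtypeEquivOfLe hT).finrank_eq, (comapSubtypeEquivOfLe hU).finrank_eq] at h₁
  have h₂ := finrank_le (T.comap S.subtype)
  rw [(comapSubtypeEquivOfLe hT).finrank_eq] at h₂
  omega

lemma two_mul_card_le_finrank_of_isotropic {S : Submodule K W} [FiniteDimensional K S]
    (hB : B.IsSymm) (hS : Disjoint S (B.orthogonal S)) {ι : Type*} [Fintype ι] {w g : ι → W}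
    (hwS : ∀ i, w i ∈ S) (hw : ∀ i j, B (w i) (w j) = 0)
    (hg : Pairwise fun i j => B (w i) (g j) = 0) (hwg : ∀ i, B (w i) (g i) ≠ 0) :
    2 * Fintype.card ι ≤ finrank K S := by
  have hli : LinearIndependent K w :=
    .of_pairwise_dual_eq_zero_one w (fun i => (B (w i) (g i))⁻¹ • B.flip (g i))
      (fun i j hij => by simp [hg hij.symm]) (fun i => by simp [hwg i])
  have hT : span K (Set.range w) ≤ S := by
    rw [span_le]
    rintro _ ⟨i, rfl⟩
    exact hwS i
  have horth : span K (Set.range w) ≤ B.orthogonal (span K (Set.range w)) := by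
    rw [span_le]
    rintro _ ⟨j, rfl⟩
    have hker : span K (Set.range w) ≤ (B.flip (w j)).ker := by
      rw [span_le]
      rintro _ ⟨i, rfl⟩
      exact hw i j
    exact fun _ hx => hker hx
  have := finrank_add_finrank_le_of_le_orthogonal hB hS hT hT horth
  rw [finrank_span_eq_card hli] at this
  omega

lemma apply_eq_zero_of_mem_rangeRadical {A : V →ₗ[K] W} {u v : W} (hu : u ∈ rangeRadical B A)
    (hv : v ∈ rangeRadical B A) : B u v = 0 :=
  hv.2 u hu.1

instance finiteDimensional_rangeRadical [FiniteDimensional K V] (A : V →ₗ[K] W) :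
    FiniteDimensional K (rangeRadical B A) :=
  finiteDimensional_of_le inf_le_left

lemma finrank_range_comp_add_finrank_rangeRadical [FiniteDimensional K V] (hB : B.IsSymm)
    (A : V →ₗ[K] W) :
    finrank K (B.comp A A).range + finrank K (rangeRadical B A) = finrank K A.range := by
  let ψ : A.range →ₗ[K] Dual K V := (B.compl₂ A).domRestrict A.range
  have hrange : ψ.range = (B.comp A A).range := by
    rw [LinearMap.range_domRestrict, ← LinearMap.range_comp]
    rfl
  have hker : ψ.ker = (rangeRadical B A).comap A.range.subtype := by
    ext w
    refine ⟨fun h => ⟨w.2, ?_⟩, fun h => LinearMap.ext fun Z => ?_⟩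
    · rintro _ ⟨Z, rfl⟩
      exact (hB.eq _ _).trans (LinearMap.congr_fun h Z)
    · exact (hB.eq _ _).trans (h.2 _ ⟨Z, rfl⟩)
  have hdim := ψ.finrank_range_add_finrank_ker
  rwa [hrange, hker, (comapSubtypeEquivOfLe (p := rangeRadical B A) inf_le_left).finrank_eq] at hdim

lemma exists_fin_spanning_modulo_ker [FiniteDimensional K V] {E : Type*} [AddCommGroup E]
    [Module K E] (M : V →ₗ[K] E) {n : ℕ} (hn : finrank K M.range ≤ n) :
    ∃ e : Fin n → V, ∀ f : Dual K V, M.ker ≤ f.ker → (∀ i, f (e i) = 0) → f = 0 := by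
  let b := finBasis K M.range
  choose e he using fun i => (b i).2
  refine ⟨fun i => if h : i.1 < finrank K M.range then e ⟨i, h⟩ else 0, fun f hf hfe => ?_⟩
  have hspan : span K (Set.range e) ≤ f.ker := by
    rw [span_le]
    rintro _ ⟨i, rfl⟩
    simpa using hfe (i.castLE hn)
  have hmap : (span K (Set.range e)).map M = M.range := by
    have hcomp : M ∘ e = M.range.subtype ∘ b := funext he
    rw [map_span, ← Set.range_comp, hcomp, Set.range_comp, ← map_span, b.span_eq, map_subtype_top]
  have htop : span K (Set.range e) ⊔ M.ker = ⊤ := by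
    rw [← comap_map_eq, hmap, LinearMap.range_eq_map, comap_map_eq, top_sup_eq]
  exact LinearMap.ker_eq_top.1 (top_le_iff.1 (htop ▸ sup_le hspan hf))

lemma two_le_finrank_range_of_apply_ne_zero {E F : Type*} [AddCommGroup E] [Module K E]
    [AddCommGroup F] [Module K F] [FiniteDimensional K F] {G : E →ₗ[K] F} (φ : Dual K F)
    {w w' : E} (hw : φ (G w) ≠ 0) (hw' : φ (G w') = 0) (hw'₀ : G w' ≠ 0) :
    2 ≤ finrank K G.range := by
  by_contra! hlt
  obtain ⟨f, hf⟩ := finrank_le_one_iff.1 (Nat.le_of_lt_succ hlt)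
  obtain ⟨a, ha⟩ := hf ⟨_, w, rfl⟩
  obtain ⟨b, hb⟩ := hf ⟨_, w', rfl⟩
  have ha' : a • (f : F) = G w := congrArg Subtype.val ha
  have hb' : b • (f : F) = G w' := congrArg Subtype.val hb
  simp only [← ha', ← hb', map_smul, smul_eq_mul, mul_eq_zero, smul_eq_zero, not_or, ne_eq]
    at hw hw' hw'₀
  tauto

lemma isPolynomialFamily_comp (B : LinearMap.BilinForm K W) (σ : V →ₗ[K] V →ₗ[K] W) :
    IsPolynomialFamily fun X => B.comp (σ X) (σ X) := by
  intro X Z v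
  convert isPolynomialCurve_quadratic (K := K) (B.comp (σ X) (σ X) v)
    (B.comp (σ X) (σ Z) v + B.comp (σ Z) (σ X) v) (B.comp (σ Z) (σ Z) v) using 2 with t
  ext u
  simp only [map_add, map_smul, LinearMap.BilinForm.comp_apply, LinearMap.add_apply,
    LinearMap.smul_apply, smul_eq_mul]
  ring

/-- Flat symmetric bilinear maps with respect to a symmetric bilinear form on the target. -/
structure IsFlatBilin (B : LinearMap.BilinForm K W) (σ : V →ₗ[K] V →ₗ[K] W) : Prop where
  form_symm : B.IsSymm
  symm : ∀ X Y, σ X Y = σ Y X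
  flat : ∀ X Y Z U, B (σ X Y) (σ Z U) = B (σ X U) (σ Y Z)

/-- A vector `X` is regular if both `σ X` and the pullback of the form under `σ X` have maximal
rank. -/
def IsRegularVector (B : LinearMap.BilinForm K W) (σ : V →ₗ[K] V →ₗ[K] W) (X : V) : Prop :=
  (∀ Y, finrank K (σ Y).range ≤ finrank K (σ X).range) ∧
    ∀ Y, finrank K (B.comp (σ Y) (σ Y)).range ≤ finrank K (B.comp (σ X) (σ X)).range

/-- The pairing `(w, Z) ↦ B w (σ Y Z)` of the radical at `X` with `V`. -/
def radicalPairing (B : LinearMap.BilinForm K W) (σ : V →ₗ[K] V →ₗ[K] W) (X Y : V) :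
    rangeRadical B (σ X) →ₗ[K] Dual K V :=
  (B.compl₂ (σ Y)).domRestrict (rangeRadical B (σ X))

lemma radicalPairing_apply (σ : V →ₗ[K] V →ₗ[K] W) (X Y Z : V) (w : rangeRadical B (σ X)) :
    radicalPairing B σ X Y w Z = B w (σ Y Z) :=
  rfl

lemma isPolynomialFamily_radicalPairing (B : LinearMap.BilinForm K W) (σ : V →ₗ[K] V →ₗ[K] W)
    (X : V) : IsPolynomialFamily (radicalPairing B σ X) := by
  intro Y Z w
  convert isPolynomialCurve_affine (K := K) (radicalPairing B σ X Y w)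
    (radicalPairing B σ X Z w) using 2 with t
  ext U
  simp [radicalPairing_apply]

lemma eventually_generic_isRegularVector [Infinite K] [FiniteDimensional K V]
    (B : LinearMap.BilinForm K W) (σ : V →ₗ[K] V →ₗ[K] W) :
    ∀ᶠ X in generic K V, IsRegularVector B σ X :=
  (isPolynomialFamily_of_linear σ).eventually_generic_finrank_range_le.and
    (isPolynomialFamily_comp B σ).eventually_generic_finrank_range_le

lemma rangeRadical_le_imageSpan (σ : V →ₗ[K] V →ₗ[K] W) (X : V) :
    rangeRadical B (σ X) ≤ imageSpan σ := by
  rintro _ ⟨⟨Y, rfl⟩, -⟩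
  exact apply_mem_imageSpan σ X Y

namespace IsFlatBilin

variable {σ : V →ₗ[K] V →ₗ[K] W} {X Y κ : V}

lemma apply_swap (h : IsFlatBilin B σ) (X Y Z U : V) :
    B (σ X Y) (σ Z U) = B (σ X Z) (σ Y U) := by
  rw [h.symm Z U, h.flat]

lemma iInf_ker_eq (h : IsFlatBilin B σ) : ⨅ X, (σ X).ker = σ.ker := by
  ext κ
  simp [LinearMap.ext_iff, h.symm κ]

lemma mem_ker_iff (h : IsFlatBilin B σ) : κ ∈ (σ X).ker ↔ σ κ X = 0 := by
  rw [LinearMap.mem_ker, h.symm]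

lemma eq_zero_of_apply_diag_eq_zero [NeZero (2 : K)] (h : IsFlatBilin B σ)
    (hS : Disjoint (imageSpan σ) (B.orthogonal (imageSpan σ))) {w : W} (hw : w ∈ imageSpan σ)
    (hdiag : ∀ Z, B w (σ Z Z) = 0) : w = 0 := by
  have hpol (Y Z : V) : B (σ Y Z) w = 0 := by
    have hsum := hdiag (Y + Z)
    simp only [map_add, LinearMap.add_apply, hdiag, h.symm Z Y] at hsum
    rw [h.form_symm.eq]
    refine (mul_eq_zero.1 ?_).resolve_left (NeZero.ne (2 : K))
    linear_combination hsum
  have hker : imageSpan σ ≤ (B.flip w).ker := by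
    rw [imageSpan, span_le]
    rintro _ ⟨Y, Z, rfl⟩
    exact hpol Y Z
  exact disjoint_def.1 hS w hw fun _ hy => hker hy

lemma apply_eq_zero_of_trilinear_eq_zero [NeZero (2 : K)] (h : IsFlatBilin B σ)
    (hS : Disjoint (imageSpan σ) (B.orthogonal (imageSpan σ))) {ι : Type*} (e : ι → V)
    (he : ∀ f : Dual K V, (σ κ).ker ≤ f.ker → (∀ i, f (e i) = 0) → f = 0)
    (hκ : ∀ i j k, B (σ κ (e i)) (σ (e j) (e k)) = 0) : σ κ = 0 := by
  have extend {b c : V} (hbc : ∀ i, B (σ κ (e i)) (σ b c) = 0) (a : V) :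
      B (σ κ a) (σ b c) = 0 :=
    LinearMap.congr_fun (he (B.flip (σ b c) ∘ₗ σ κ) (LinearMap.ker_le_ker_comp _ _) hbc) a
  have hκ₁ (a : V) (j k : ι) : B (σ κ a) (σ (e j) (e k)) = 0 := extend (hκ · j k) a
  have hκ₂ (a b : V) (k : ι) : B (σ κ a) (σ b (e k)) = 0 :=
    extend (fun i => by rw [h.apply_swap]; exact hκ₁ b i k) a
  have hκ₃ (a b c : V) : B (σ κ a) (σ b c) = 0 :=
    extend (fun i => by rw [h.apply_swap, h.symm (e i)]; exact hκ₂ b c i) a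
  ext a
  exact h.eq_zero_of_apply_diag_eq_zero hS (apply_mem_imageSpan σ κ a) fun Z => hκ₃ a Z Z

section Regular

variable [Infinite K] [FiniteDimensional K V]

lemma apply_mem_rangeRadical (h : IsFlatBilin B σ) (hX : IsRegularVector B σ X)
    (hκ : σ κ X = 0) (Y : V) : σ κ Y ∈ rangeRadical B (σ X) := by
  refine ⟨(isPolynomialFamily_of_linear σ).mem_range_of_forall_ne_zero hX.1 Y fun t ht => ?_, ?_⟩
  · refine ⟨t⁻¹ • κ, ?_⟩
    simp [h.symm X κ, hκ, h.symm Y κ, ht]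
  · rintro _ ⟨Z, rfl⟩
    rw [h.form_symm.eq, h.apply_swap, hκ, map_zero, LinearMap.zero_apply]

lemma apply_eq_zero_of_comp_apply_eq_zero [NeZero (2 : K)] (h : IsFlatBilin B σ)
    (hS : Disjoint (imageSpan σ) (B.orthogonal (imageSpan σ))) (hX : IsRegularVector B σ X)
    (hκ : σ κ X = 0) {L : V} (hL : B.comp (σ X) (σ X) L = 0) : σ κ L = 0 := by
  have hmem (Y : V) : B.comp (σ Y) (σ Y) κ ∈ (B.comp (σ X) (σ X)).range := by
    refine (isPolynomialFamily_comp B σ).mem_range_of_forall_ne_zero hX.2 Y fun t ht => ?_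
    refine ⟨(t ^ 2)⁻¹ • κ, ?_⟩
    have hXY (Z : V) : B (σ κ Y) (σ X Z) = 0 := by
      rw [h.apply_swap, hκ, map_zero, LinearMap.zero_apply]
    ext Z
    simp only [map_add, map_smul, LinearMap.smul_apply, LinearMap.BilinForm.comp_apply,
      LinearMap.add_apply, h.symm _ κ, hκ, zero_add, hXY, smul_eq_mul]
    field_simp
    ring
  refine h.eq_zero_of_apply_diag_eq_zero hS (apply_mem_imageSpan σ κ L) fun Y => ?_
  obtain ⟨M, hM⟩ := hmem Y
  calc B (σ κ L) (σ Y Y) = B (σ Y κ) (σ Y L) := by rw [h.apply_swap, h.symm κ, h.symm L]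
    _ = B (σ X M) (σ X L) := (LinearMap.congr_fun hM L).symm
    _ = B (σ X L) (σ X M) := h.form_symm.eq _ _
    _ = 0 := LinearMap.congr_fun hL M

lemma finrank_ker_le_add_four [NeZero (2 : K)] (h : IsFlatBilin B σ)
    (hS : Disjoint (imageSpan σ) (B.orthogonal (imageSpan σ))) (hX : IsRegularVector B σ X)
    (hrank : finrank K (B.comp (σ X) (σ X)).range ≤ 2) :
    finrank K (σ X).ker ≤ finrank K σ.ker + 4 := by
  obtain ⟨e, he⟩ := exists_fin_spanning_modulo_ker _ hrank
  let T (i j k : Fin 2) : Dual K V := B.flip (σ (e j) (e k)) ∘ₗ σ.flip (e i)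
  let g : V →ₗ[K] Fin 4 → K := LinearMap.pi ![T 0 0 0, T 0 0 1, T 0 1 1, T 1 1 1]
  have hker : (σ X).ker ⊓ g.ker ≤ σ.ker := by
    rintro κ ⟨hκX, hκg⟩
    have hκ : σ κ X = 0 := h.mem_ker_iff.1 hκX
    have hg : ∀ m : Fin 4, ![T 0 0 0, T 0 0 1, T 0 1 1, T 1 1 1] m κ = 0 := congrFun hκg
    have h₀₀₀ : B (σ κ (e 0)) (σ (e 0) (e 0)) = 0 := hg 0
    have h₀₀₁ : B (σ κ (e 0)) (σ (e 0) (e 1)) = 0 := hg 1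
    have h₀₁₁ : B (σ κ (e 0)) (σ (e 1) (e 1)) = 0 := hg 2
    have h₁₁₁ : B (σ κ (e 1)) (σ (e 1) (e 1)) = 0 := hg 3
    have h₁₀₀ : B (σ κ (e 1)) (σ (e 0) (e 0)) = 0 := by rwa [h.apply_swap, h.symm (e 1)]
    have h₁₀₁ : B (σ κ (e 1)) (σ (e 0) (e 1)) = 0 := by rwa [h.apply_swap]
    refine h.apply_eq_zero_of_trilinear_eq_zero hS e (fun f hf => he f ?_) ?_
    · exact fun L hL => hf (h.apply_eq_zero_of_comp_apply_eq_zero hS hX hκ hL)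
    · simp only [Fin.forall_fin_two, h.symm (e 1) (e 0), *, and_self]
  have hdim := (g.domRestrict (σ X).ker).finrank_range_add_finrank_ker
  have hrange := finrank_le (g.domRestrict (σ X).ker).range
  have hinf : finrank K (g.domRestrict (σ X).ker).ker ≤ finrank K σ.ker := by
    rw [LinearMap.ker_domRestrict, ← finrank_map_subtype_eq, map_comap_subtype]
    exact finrank_mono hker
  rw [finrank_fin_fun] at hrange
  omega

lemma exists_mem_jointKernel_pair (h : IsFlatBilin B σ) (hX : IsRegularVector B σ X)
    (hdim : finrank K σ.ker + finrank K (rangeRadical B (σ X)) < finrank K (σ X).ker) (Y : V) :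
    ∃ κ ∈ jointKernel σ {X, Y}, σ κ ≠ 0 := by
  let f : (σ X).ker →ₗ[K] rangeRadical B (σ X) :=
    ((σ.flip Y).domRestrict (σ X).ker).codRestrict _ fun κ =>
      h.apply_mem_rangeRadical hX (h.mem_ker_iff.1 κ.2) Y
  by_contra! hcon
  have hker : f.ker.map (σ X).ker.subtype ≤ σ.ker := by
    rintro _ ⟨κ, hκ, rfl⟩
    refine hcon κ (mem_jointKernel.2 ?_)
    simpa using ⟨h.mem_ker_iff.1 κ.2, congrArg Subtype.val hκ⟩
  have h₁ := finrank_mono hker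
  rw [finrank_map_subtype_eq] at h₁
  have h₂ := f.finrank_range_add_finrank_ker
  have h₃ := finrank_le f.range
  omega

lemma apply_mem_map_ker_radicalPairing (h : IsFlatBilin B σ) (hX : IsRegularVector B σ X)
    (hκ : κ ∈ jointKernel σ {X, Y}) (Z : V) :
    σ κ Z ∈ (radicalPairing B σ X Y).ker.map (rangeRadical B (σ X)).subtype := by
  have hκX : σ κ X = 0 := mem_jointKernel.1 hκ X (by simp)
  have hκY : σ κ Y = 0 := mem_jointKernel.1 hκ Y (by simp)
  refine ⟨⟨_, h.apply_mem_rangeRadical hX hκX Z⟩, LinearMap.ext fun U => ?_, rfl⟩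
  rw [radicalPairing_apply, h.apply_swap, hκY, map_zero, LinearMap.zero_apply,
    LinearMap.zero_apply]

lemma exists_two_le_finrank_range_radicalPairing [NeZero (2 : K)] (h : IsFlatBilin B σ)
    (hS : Disjoint (imageSpan σ) (B.orthogonal (imageSpan σ))) (hX : IsRegularVector B σ X)
    (hdim : finrank K σ.ker + finrank K (rangeRadical B (σ X)) < finrank K (σ X).ker) :
    ∃ Y, 2 ≤ finrank K (radicalPairing B σ X Y).range := by
  have exists_vec (Y : V) : ∃ w ∈ (radicalPairing B σ X Y).ker, ∃ Z, B w (σ Z Z) ≠ 0 := by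
    obtain ⟨κ, hκ, hκ₀⟩ := h.exists_mem_jointKernel_pair hX hdim Y
    obtain ⟨Z, hZ⟩ := DFunLike.ne_iff.1 hκ₀
    obtain ⟨w, hw, hwZ⟩ := h.apply_mem_map_ker_radicalPairing hX hκ Z
    refine ⟨w, hw, ?_⟩
    by_contra! hdiag
    exact hZ (hwZ ▸ h.eq_zero_of_apply_diag_eq_zero hS (rangeRadical_le_imageSpan σ X w.2) hdiag)
  obtain ⟨w, -, Y₀, hY₀⟩ := exists_vec 0
  obtain ⟨w', hw', Y₁, hY₁⟩ := exists_vec Y₀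
  have hw'Y₀ (Z : V) : B w' (σ Y₀ Z) = 0 := LinearMap.congr_fun hw' Z
  obtain ⟨t, ht, hwt⟩ : ∃ t : K, t ≠ 0 ∧ B w (σ Y₀ Y₀) + t * B w (σ Y₁ Y₀) ≠ 0 := by
    by_contra! hcon
    have h₁ := hcon 1 one_ne_zero
    have h₂ := hcon (-1) (neg_ne_zero.2 one_ne_zero)
    exact mul_ne_zero (NeZero.ne (2 : K)) hY₀ (by linear_combination h₁ + h₂)
  refine ⟨Y₀ + t • Y₁, two_le_finrank_range_of_apply_ne_zero (Dual.eval K V Y₀) (w := w) (w' := w')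
    ?_ ?_ (DFunLike.ne_iff.2 ⟨Y₁, ?_⟩)⟩
  · simpa [radicalPairing_apply] using hwt
  · simp [radicalPairing_apply, hw'Y₀, h.symm Y₁ Y₀]
  · simp [radicalPairing_apply, hw'Y₀, ht, hY₁]

end Regular

lemma exists_coeff_apply_eq_mul_mul [NeZero (2 : K)] (h : IsFlatBilin B σ)
    (hS : Disjoint (imageSpan σ) (B.orthogonal (imageSpan σ))) {l : Dual K V} {w : W}
    (hκ : σ κ ≠ 0) (hl : ∀ Z, σ κ Z = l Z • w) :
    ∃ c ≠ 0, ∀ Z Z', B w (σ Z Z') = c * (l Z * l Z') := by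
  obtain ⟨Z₀, hZ₀⟩ := DFunLike.ne_iff.1 hκ
  have hlZ₀ : l Z₀ ≠ 0 := by rintro h₀; simp [hl, h₀] at hZ₀
  have hswap (a b c : V) : l a * B w (σ b c) = l b * B w (σ a c) := by
    simpa [hl] using h.apply_swap κ a b c
  have hcube (Z Z' : V) : B w (σ Z Z') = B w (σ Z₀ Z₀) / l Z₀ ^ 2 * (l Z * l Z') := by
    have h₁ := hswap Z₀ Z Z'
    have h₂ := hswap Z₀ Z' Z₀
    rw [h.symm Z₀ Z'] at h₁
    field_simp
    linear_combination l Z₀ * h₁ + l Z * h₂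
  refine ⟨_, fun hc => hZ₀ ?_, hcube⟩
  refine h.eq_zero_of_apply_diag_eq_zero hS (apply_mem_imageSpan σ κ Z₀) fun Z => ?_
  rw [hl, map_smul, LinearMap.smul_apply, hcube, hc, zero_mul, smul_zero]

lemma exists_eq_smul_of_apply_eq_smul (h : IsFlatBilin B σ) {κ' : V} {l l' : Dual K V} {w : W}
    {c : K} (hκ : σ κ ≠ 0) (hl : ∀ Z, σ κ Z = l Z • w) (hc : c ≠ 0)
    (hw : ∀ Z Z', B w (σ Z Z') = c * (l Z * l Z')) (hl' : ∀ Z, σ κ' Z = l' Z • w) :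
    ∃ a : K, σ κ' = a • σ κ := by
  obtain ⟨Z₀, hZ₀⟩ := DFunLike.ne_iff.1 hκ
  have hlZ₀ : l Z₀ ≠ 0 := by rintro h₀; simp [hl, h₀] at hZ₀
  refine ⟨l' Z₀ / l Z₀, LinearMap.ext fun Z => ?_⟩
  have hswap : l' Z * (c * (l Z₀ * l Z₀)) = l' Z₀ * (c * (l Z * l Z₀)) := by
    simpa [hl', hw] using h.apply_swap κ' Z Z₀ Z₀
  have hprop : l' Z * l Z₀ = l' Z₀ * l Z :=
    mul_right_cancel₀ (mul_ne_zero hc hlZ₀) (by linear_combination hswap)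
  rw [hl', LinearMap.smul_apply, hl, smul_smul, div_mul_eq_mul_div, ← hprop,
    mul_div_cancel_right₀ _ hlZ₀]

end IsFlatBilin

/-- A one-dimensional joint kernel of `s`, taken modulo the nullity space of `σ` and spanned by
`dir`, on which `σ` has rank one; the cubic form `B (σ dir Z) (σ Z Z)` is then `coeff` times the
cube of the linear form `form`. -/
structure KernelCube (B : LinearMap.BilinForm K W) (σ : V →ₗ[K] V →ₗ[K] W) (s : Set V) where
  dir : V
  form : Dual K V
  vec : W
  coeff : K
  dir_mem : dir ∈ jointKernel σ s
  apply_dir_ne_zero : σ dir ≠ 0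
  apply_dir : ∀ Z, σ dir Z = form Z • vec
  exists_eq_smul : ∀ κ ∈ jointKernel σ s, ∃ a : K, σ κ = a • σ dir
  coeff_ne_zero : coeff ≠ 0
  apply_vec : ∀ Z Z', B vec (σ Z Z') = coeff * (form Z * form Z')
  vec_isotropic : B vec vec = 0

lemma exists_dual_apply_eq_smul_of_mem_span_singleton {A : V →ₗ[K] W} {w : W}
    (hA : ∀ Z, A Z ∈ span K {w}) : ∃ l : Dual K V, ∀ Z, A Z = l Z • w := by
  rcases eq_or_ne w 0 with rfl | hw
  · exact ⟨0, fun Z => by simpa using hA Z⟩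
  · obtain ⟨f, hf⟩ := Module.Projective.exists_dual_eq_one K hw
    refine ⟨f ∘ₗ A, fun Z => ?_⟩
    obtain ⟨a, ha⟩ := mem_span_singleton.1 (hA Z)
    simp [← ha, hf]

namespace IsFlatBilin

variable {σ : V →ₗ[K] V →ₗ[K] W} {X Y : V}

lemma nonempty_kernelCube [NeZero (2 : K)] (h : IsFlatBilin B σ)
    (hS : Disjoint (imageSpan σ) (B.orthogonal (imageSpan σ))) {s : Set V} {w : W}
    (hne : ∃ κ ∈ jointKernel σ s, σ κ ≠ 0) (hw : B w w = 0)
    (hspan : ∀ κ ∈ jointKernel σ s, ∀ Z, σ κ Z ∈ span K {w}) :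
    Nonempty (KernelCube B σ s) := by
  have hform : ∀ κ ∈ jointKernel σ s, ∃ l : Dual K V, ∀ Z, σ κ Z = l Z • w := fun κ hκ =>
    exists_dual_apply_eq_smul_of_mem_span_singleton (hspan κ hκ)
  obtain ⟨κ, hκ, hκ₀⟩ := hne
  obtain ⟨l, hl⟩ := hform κ hκ
  obtain ⟨c, hc, hcube⟩ := h.exists_coeff_apply_eq_mul_mul hS hκ₀ hl
  refine ⟨⟨κ, l, w, c, hκ, hκ₀, hl, fun κ' hκ' => ?_, hc, hcube, hw⟩⟩
  obtain ⟨l', hl'⟩ := hform κ' hκ'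
  exact h.exists_eq_smul_of_apply_eq_smul hκ₀ hl hc hcube hl'

variable [Infinite K] [FiniteDimensional K V] [NeZero (2 : K)]

lemma nonempty_kernelCube_pair (h : IsFlatBilin B σ)
    (hS : Disjoint (imageSpan σ) (B.orthogonal (imageSpan σ))) (hX : IsRegularVector B σ X)
    (hdim : finrank K σ.ker + finrank K (rangeRadical B (σ X)) < finrank K (σ X).ker)
    (hrad : finrank K (rangeRadical B (σ X)) ≤ 3)
    (hY : 2 ≤ finrank K (radicalPairing B σ X Y).range) :
    Nonempty (KernelCube B σ {X, Y}) := by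
  have hker : finrank K (radicalPairing B σ X Y).ker ≤ 1 := by
    have := (radicalPairing B σ X Y).finrank_range_add_finrank_ker
    omega
  obtain ⟨v, hv⟩ := finrank_le_one_iff.1 hker
  refine h.nonempty_kernelCube hS (h.exists_mem_jointKernel_pair hX hdim Y)
    (apply_eq_zero_of_mem_rangeRadical v.1.2 v.1.2) fun κ hκ Z => ?_
  obtain ⟨u, hu, huZ⟩ := h.apply_mem_map_ker_radicalPairing hX hκ Z
  obtain ⟨a, ha⟩ := hv ⟨u, hu⟩
  refine mem_span_singleton.2 ⟨a, ?_⟩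
  rw [← huZ]
  exact congrArg (fun u : (radicalPairing B σ X Y).ker => (u.1 : W)) ha

lemma eventually_generic_nonempty_kernelCube_pair (h : IsFlatBilin B σ)
    (hS : Disjoint (imageSpan σ) (B.orthogonal (imageSpan σ)))
    (hdim : finrank K (imageSpan σ) ≤ 10)
    (hnull : finrank K σ.ker + finrank K (imageSpan σ) < finrank K V)
    (hX : IsRegularVector B σ X) :
    ∀ᶠ Y in generic K V, Nonempty (KernelCube B σ {X, Y}) := by
  have hrange : (σ X).range ≤ imageSpan σ := by
    rintro _ ⟨Y, rfl⟩
    exact apply_mem_imageSpan σ X Y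
  have hrad := finrank_add_finrank_le_of_le_orthogonal h.form_symm hS hrange
    (rangeRadical_le_imageSpan σ X) inf_le_right
  have hcomp := finrank_range_comp_add_finrank_rangeRadical h.form_symm (σ X)
  have hX_ker := (σ X).finrank_range_add_finrank_ker
  have hlt : finrank K σ.ker + finrank K (rangeRadical B (σ X)) < finrank K (σ X).ker := by omega
  have hrad₃ : finrank K (rangeRadical B (σ X)) ≤ 3 := by
    by_contra! hcon
    have := h.finrank_ker_le_add_four hS hX (by omega)
    omega
  have hopen := (isPolynomialFamily_radicalPairing B σ X).isLineOpen_le_finrank_range 2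
  filter_upwards [hopen.eventually_generic
    (h.exists_two_le_finrank_range_radicalPairing hS hX hlt)] with Y hY
  exact h.nonempty_kernelCube_pair hS hX hlt hrad₃ hY

end IsFlatBilin

namespace KernelCube

variable {σ : V →ₗ[K] V →ₗ[K] W} {s s' : Set V} {Z : V}

lemma vec_ne_zero (C : KernelCube B σ s) : C.vec ≠ 0 := fun hw =>
  C.apply_dir_ne_zero (LinearMap.ext fun Z => by simp [C.apply_dir, hw])

lemma form_ne_zero (C : KernelCube B σ s) : C.form ≠ 0 := fun hl =>
  C.apply_dir_ne_zero (LinearMap.ext fun Z => by simp [C.apply_dir, hl])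

lemma vec_mem_imageSpan (C : KernelCube B σ s) : C.vec ∈ imageSpan σ := by
  obtain ⟨Z, hZ⟩ := DFunLike.ne_iff.1 C.form_ne_zero
  rw [← (imageSpan σ).smul_mem_iff hZ, ← C.apply_dir]
  exact apply_mem_imageSpan σ C.dir Z

lemma form_eq_zero_of_mem (C : KernelCube B σ s) (hZ : Z ∈ s) : C.form Z = 0 := by
  have := mem_jointKernel.1 C.dir_mem Z hZ
  simpa [C.apply_dir, C.vec_ne_zero] using this

lemma form_apply_ne_zero_iff (C : KernelCube B σ s) :
    C.form Z ≠ 0 ↔ jointKernel σ (insert Z s) ≤ σ.ker := by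
  refine ⟨fun hZ κ hκ => ?_, fun hker hZ => C.apply_dir_ne_zero (hker ?_)⟩
  · rw [mem_jointKernel, Set.forall_mem_insert, ← mem_jointKernel] at hκ
    obtain ⟨a, ha⟩ := C.exists_eq_smul κ hκ.2
    have ha₀ : a = 0 := by simpa [ha, C.apply_dir, hZ, C.vec_ne_zero] using hκ.1
    rw [LinearMap.mem_ker, ha, ha₀, zero_smul]
  · rw [mem_jointKernel, Set.forall_mem_insert, ← mem_jointKernel]
    exact ⟨by rw [C.apply_dir, hZ, zero_smul], C.dir_mem⟩

lemma eventually_generic_jointKernel_insert_le [Infinite K] (C : KernelCube B σ s) :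
    ∀ᶠ Z in generic K V, jointKernel σ (insert Z s) ≤ σ.ker :=
  (eventually_generic_ne_zero C.form_ne_zero).mono fun _ => C.form_apply_ne_zero_iff.1

lemma apply_vec_vec_eq_zero (C : KernelCube B σ s) (C' : KernelCube B σ s') (hZ : C.form Z ≠ 0)
    (hZ' : C'.form Z = 0) : B C'.vec C.vec = 0 := by
  have := C'.apply_vec C.dir Z
  simpa [C.apply_dir, hZ, hZ'] using this

end KernelCube

/-- General position of a family of vectors with respect to `σ`: the joint kernel of any two
members is a rank-one kernel, and any three members have no joint kernel beyond the nullity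
space. -/
structure IsGeneralPosition {ι : Type*} (B : LinearMap.BilinForm K W) (σ : V →ₗ[K] V →ₗ[K] W)
    (x : ι → V) : Prop where
  nonempty_kernelCube : ∀ p : Finset ι, p.card = 2 → Nonempty (KernelCube B σ (x '' p))
  jointKernel_le : ∀ t : Finset ι, t.card = 3 → jointKernel σ (x '' t) ≤ σ.ker

lemma IsGeneralPosition.form_apply_eq_zero_iff {ι : Type*}
    {σ : V →ₗ[K] V →ₗ[K] W} {x : ι → V} (hx : IsGeneralPosition B σ x) {p : Finset ι}
    (hp : p.card = 2) (C : KernelCube B σ (x '' p)) (k : ι) : C.form (x k) = 0 ↔ k ∈ p := by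
  classical
  refine ⟨not_imp_not.1 fun hk => C.form_apply_ne_zero_iff.2 ?_, fun hk =>
    C.form_eq_zero_of_mem ⟨k, hk, rfl⟩⟩
  have := hx.jointKernel_le (insert k p) (by rw [Finset.card_insert_of_notMem hk, hp])
  rwa [Finset.coe_insert, Set.image_insert_eq] at this

lemma IsGeneralPosition.apply_vec_eq_zero_iff {ι : Type*} {σ : V →ₗ[K] V →ₗ[K] W} {x : ι → V}
    (hx : IsGeneralPosition B σ x) {p : Finset ι} (hp : p.card = 2) (C : KernelCube B σ (x '' p))
    (k l : ι) : B C.vec (σ (x k) (x l)) = 0 ↔ k ∈ p ∨ l ∈ p := by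
  simp [C.apply_vec, C.coeff_ne_zero, hx.form_apply_eq_zero_iff hp]

lemma IsGeneralPosition.apply_vec_vec_eq_zero {ι : Type*} {σ : V →ₗ[K] V →ₗ[K] W} {x : ι → V}
    (hx : IsGeneralPosition B σ x) {p q : Finset ι} (hp : p.card = 2) (hq : q.card = 2)
    (hpq : p ≠ q) (C : KernelCube B σ (x '' p)) (D : KernelCube B σ (x '' q)) :
    B C.vec D.vec = 0 := by
  obtain ⟨k, hkp, hkq⟩ := Finset.not_subset.1 fun hsub =>
    hpq (Finset.eq_of_subset_of_card_le hsub (by rw [hp, hq]))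
  exact D.apply_vec_vec_eq_zero C (mt (hx.form_apply_eq_zero_iff hq D k).1 hkq)
    ((hx.form_apply_eq_zero_iff hp C k).2 hkp)

namespace IsFlatBilin

variable {σ : V →ₗ[K] V →ₗ[K] W}

lemma exists_isGeneralPosition [Infinite K] [FiniteDimensional K V] [NeZero (2 : K)]
    (h : IsFlatBilin B σ) (hS : Disjoint (imageSpan σ) (B.orthogonal (imageSpan σ)))
    (hdim : finrank K (imageSpan σ) ≤ 10)
    (hnull : finrank K σ.ker + finrank K (imageSpan σ) < finrank K V) :
    ∃ x : Fin 4 → V, IsGeneralPosition B σ x := by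
  have hreg := eventually_generic_isRegularVector B σ
  have hcube {X : V} (hX : IsRegularVector B σ X) :=
    h.eventually_generic_nonempty_kernelCube_pair hS hdim hnull hX
  obtain ⟨X₀, hX₀⟩ := hreg.exists
  obtain ⟨X₁, hX₁, ⟨C₀₁⟩⟩ := (hreg.and (hcube hX₀)).exists
  obtain ⟨X₂, hX₂, ⟨C₀₂⟩, ⟨C₁₂⟩, h₀₁₂⟩ := (hreg.and ((hcube hX₀).and ((hcube hX₁).and
    C₀₁.eventually_generic_jointKernel_insert_le))).exists
  obtain ⟨X₃, ⟨C₀₃⟩, ⟨C₁₃⟩, ⟨C₂₃⟩, h₀₁₃, h₀₂₃, h₁₂₃⟩ := ((hcube hX₀).and ((hcube hX₁).and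
    ((hcube hX₂).and (C₀₁.eventually_generic_jointKernel_insert_le.and
    (C₀₂.eventually_generic_jointKernel_insert_le.and
    C₁₂.eventually_generic_jointKernel_insert_le))))).exists
  have hpairs : ∀ p : Finset (Fin 4), p.card = 2 →
      p = {0, 1} ∨ p = {0, 2} ∨ p = {0, 3} ∨ p = {1, 2} ∨ p = {1, 3} ∨ p = {2, 3} := by decide
  have htriples : ∀ t : Finset (Fin 4), t.card = 3 →
      t = {2, 0, 1} ∨ t = {3, 0, 1} ∨ t = {3, 0, 2} ∨ t = {3, 1, 2} := by decide
  refine ⟨![X₀, X₁, X₂, X₃], fun p hp => ?_, fun t ht => ?_⟩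
  · rcases hpairs p hp with rfl | rfl | rfl | rfl | rfl | rfl <;>
      simpa [Set.image_insert_eq] using Nonempty.intro ‹_›
  · rcases htriples t ht with rfl | rfl | rfl | rfl <;> simpa [Set.image_insert_eq]

lemma twelve_le_finrank_imageSpan [FiniteDimensional K V] (h : IsFlatBilin B σ)
    (hS : Disjoint (imageSpan σ) (B.orthogonal (imageSpan σ))) {x : Fin 4 → V}
    (hx : IsGeneralPosition B σ x) : 12 ≤ finrank K (imageSpan σ) := by
  let Pair := {p : Finset (Fin 4) // p.card = 2}
  let C (p : Pair) : KernelCube B σ (x '' p.1) := (hx.nonempty_kernelCube p.1 p.2).some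
  have hcompl : ∀ q : Pair, ∃ k l, ∀ p : Pair, k ∈ p.1 ∨ l ∈ p.1 ↔ p ≠ q := by decide
  choose k l hkl using hcompl
  have hdual (p q : Pair) : B (C p).vec (σ (x (k q)) (x (l q))) = 0 ↔ p ≠ q :=
    (hx.apply_vec_eq_zero_iff p.2 (C p) _ _).trans (hkl q p)
  have horth (p q : Pair) : B (C p).vec (C q).vec = 0 := by
    obtain rfl | hpq := eq_or_ne p q
    · exact (C p).vec_isotropic
    · exact hx.apply_vec_vec_eq_zero p.2 q.2 (Subtype.coe_ne_coe.2 hpq) (C p) (C q)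
  have hcard : Fintype.card Pair = 6 := by decide
  have := two_mul_card_le_finrank_of_isotropic h.form_symm hS (fun p => (C p).vec_mem_imageSpan)
    horth (fun p q hpq => (hdual p q).2 hpq) fun p => (hdual p p).not.2 (not_not_intro rfl)
  omega

end IsFlatBilin

end FlatBilin

theorem statement0_general {K V W : Type*} [Field K] [Infinite K] [NeZero (2 : K)]
    [AddCommGroup V] [Module K V] [FiniteDimensional K V] [AddCommGroup W] [Module K W]
    (B : LinearMap.BilinForm K W) (hBsymm : ∀ x y, B x y = B y x)
    (σ : V →ₗ[K] V →ₗ[K] W) (hσsymm : ∀ X Y, σ X Y = σ Y X)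
    (hflat : ∀ X Y Z U, B (σ X Y) (σ Z U) = B (σ X U) (σ Y Z))
    (hdim : finrank K (span K {w | ∃ X Y, σ X Y = w}) ≤ 10)
    (hnull : finrank K (⨅ X, LinearMap.ker (σ X) : Submodule K V) +
      finrank K (span K {w | ∃ X Y, σ X Y = w}) < finrank K V) :
    (span K {w | ∃ X Y, σ X Y = w}) ⊓ B.orthogonal (span K {w | ∃ X Y, σ X Y = w}) ≠ ⊥ := by
  intro hbot
  have h : IsFlatBilin B σ := ⟨⟨hBsymm⟩, hσsymm, hflat⟩
  have hS : Disjoint (imageSpan σ) (B.orthogonal (imageSpan σ)) := disjoint_iff.2 hbot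
  rw [h.iInf_ker_eq] at hnull
  obtain ⟨x, hx⟩ := h.exists_isGeneralPosition hS hdim hnull
  exact absurd ((h.twelve_le_finrank_imageSpan hS hx).trans hdim) (by norm_num)

lemma BilinFormHasType.finrank_eq {W : Type*} [AddCommGroup W] [Module ℝ W]
    {B : LinearMap.BilinForm ℝ W} {r q : ℕ} (h : BilinFormHasType B r q) :
    finrank ℝ W = r + q := by
  obtain ⟨b, -⟩ := h
  simpa using finrank_eq_card_basis b

/-- do Carmo–Dajczer basic lemma. Let `V₁`, `W` be finite-dimensional real
vector spaces with a nondegenerate symmetric bilinear form of type `(r, r)`, `r ≤ 5`, on `W`.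
If `σ : V₁ × V₁ → W` is a nonzero flat symmetric bilinear map whose nullity space `N(σ)`
satisfies `dim N(σ) < dim V₁ - 2r`, then `S(σ)` is a degenerate subspace of `W`. -/
theorem statement0 {V₁ W : Type*} [AddCommGroup V₁] [Module ℝ V₁] [FiniteDimensional ℝ V₁]
    [AddCommGroup W] [Module ℝ W] [FiniteDimensional ℝ W]
    (B : LinearMap.BilinForm ℝ W) (hBsymm : ∀ x y, B x y = B y x)
    (hBnd : B.Nondegenerate) (r : ℕ) (hr : r ≤ 5) (htype : BilinFormHasType B r r)
    (σ : V₁ →ₗ[ℝ] V₁ →ₗ[ℝ] W) (hσsymm : ∀ X Y, σ X Y = σ Y X) (hσne : σ ≠ 0)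
    (hflat : ∀ X Y Z U, B (σ X Y) (σ Z U) = B (σ X U) (σ Y Z))
    (hnull : finrank ℝ (⨅ X, LinearMap.ker (σ X) : Submodule ℝ V₁) + 2 * r < finrank ℝ V₁) :
    (span ℝ {w | ∃ X Y, σ X Y = w}) ⊓ B.orthogonal (span ℝ {w | ∃ X Y, σ X Y = w}) ≠ ⊥ := by
  have hS := finrank_le (span ℝ {w | ∃ X Y, σ X Y = w})
  have hW := htype.finrank_eq
  exact statement0_general B hBsymm σ hσsymm hflat (by omega) (by omega)
end

section
/- Let V and W be finite-dimensional real vector spaces, W with a nondegenerate symmetric bilinear form, and let β : V × V → W be a flat symmetric bilinear map. Then for every regular element X ∈ RE(β), one has β(ker β(X), V) ⊆ U(X); that is, β(Z, Y) ∈ β(X,V) ∩ β(X,V)⊥ for every Z with β(X,Z) = 0 and every Y ∈ V. -/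
open Module Submodule

/-!
The orthogonality `β(Z,Y) ⊥ β(X,V)` is flatness applied to `β(X,Z) = 0`. For the other half,
suppose `β(Y,Z) ∉ β(X,V)`. For `t ≠ 0` the range of `β(X + tY)` contains
`β(X + tY)(t⁻¹Z) = β(Y,Z)` and a perturbation of `β(X,V)`. If `F` is an injective linear map on a
finite-dimensional space with left inverse `L`, then `F + tG` can only fail to be injective when
`-t⁻¹` is an eigenvalue of `LG`, hence for finitely many `t`. So for some `t ≠ 0` the range of
`β(X + tY)` has dimension at least `dim β(X,V) + 1`, contradicting the regularity of `X`.
-/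

section Perturbation

variable {K E V W : Type*} [Field K] [AddCommGroup E] [Module K E]
  [AddCommGroup V] [Module K V] [AddCommGroup W] [Module K W]

theorem finite_setOf_not_injective_id_add_smul [FiniteDimensional K E] (T : End K E) :
    {t : K | ¬ Function.Injective (LinearMap.id + t • T : End K E)}.Finite := by
  have h_inv : {t : K | -t⁻¹ ∈ {μ | T.HasEigenvalue μ}}.Finite :=
    T.finite_hasEigenvalue.preimage (neg_injective.comp inv_injective).injOn
  refine h_inv.subset fun t ht => ?_
  obtain ⟨v, hv, hv0⟩ : ∃ v, (LinearMap.id + t • T : End K E) v = 0 ∧ v ≠ 0 := by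
    simpa [injective_iff_map_eq_zero] using ht
  have ht0 : t ≠ 0 := by
    rintro rfl
    exact hv0 (by simpa using hv)
  have hTv : t • T v = -v := eq_neg_of_add_eq_zero_right hv
  refine End.hasEigenvalue_of_hasEigenvector (x := v) ⟨End.mem_eigenspace_iff.2 ?_, hv0⟩
  calc T v = t⁻¹ • t • T v := (inv_smul_smul₀ ht0 _).symm
    _ = t⁻¹ • -v := by rw [hTv]
    _ = -t⁻¹ • v := by rw [smul_neg, neg_smul]

theorem finite_setOf_not_injective_add_smul [FiniteDimensional K E] {F : E →ₗ[K] W}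
    (hF : Function.Injective F) (G : E →ₗ[K] W) :
    {t : K | ¬ Function.Injective (F + t • G)}.Finite := by
  obtain ⟨L, hL⟩ := F.exists_leftInverse_of_injective (LinearMap.ker_eq_bot.2 hF)
  refine (finite_setOf_not_injective_id_add_smul (L ∘ₗ G)).subset fun t ht h_inj => ht ?_
  have h_comp : L ∘ₗ (F + t • G) = LinearMap.id + t • (L ∘ₗ G) := by
    rw [LinearMap.comp_add, LinearMap.comp_smul, hL]
  rw [← h_comp, LinearMap.coe_comp] at h_inj
  exact h_inj.of_comp

theorem injective_coprod_subtype_toSpanSingleton {p : Submodule K W} {w : W} (hw : w ∉ p) :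
    Function.Injective (p.subtype.coprod (LinearMap.toSpanSingleton K W w)) := by
  have h_disj : Disjoint (LinearMap.range p.subtype)
      (LinearMap.range (LinearMap.toSpanSingleton K W w)) := by
    rw [range_subtype, LinearMap.range_toSpanSingleton]
    exact disjoint_span_singleton_of_notMem hw
  have hw0 : w ≠ 0 := fun h => hw (h ▸ p.zero_mem)
  rw [← LinearMap.ker_eq_bot, LinearMap.ker_coprod_of_disjoint_range _ _ h_disj, ker_subtype,
    LinearMap.ker_toSpanSingleton K hw0, prod_bot]

theorem exists_rank_lt_rank_add_smul [Infinite K] {A : V →ₗ[K] W}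
    [FiniteDimensional K (LinearMap.range A)] {C : V →ₗ[K] W} {z : V} (hz : A z = 0)
    (hCz : C z ∉ LinearMap.range A) : ∃ t : K, A.rank < (A + t • C).rank := by
  obtain ⟨s, hs⟩ := A.rangeRestrict.exists_rightInverse_of_surjective A.range_rangeRestrict
  have hAs (w) : A (s w) = w := congrArg Subtype.val (LinearMap.congr_fun hs w)
  let F := (LinearMap.range A).subtype.coprod (LinearMap.toSpanSingleton K W (C z))
  let G := (C ∘ₗ s).coprod (0 : K →ₗ[K] W)
  have hF : Function.Injective F := injective_coprod_subtype_toSpanSingleton hCz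
  obtain ⟨t, ht⟩ := ((finite_setOf_not_injective_add_smul hF G).insert 0).exists_notMem
  obtain ⟨ht0, h_inj⟩ : t ≠ 0 ∧ Function.Injective (F + t • G) := by
    simpa only [Set.mem_insert_iff, Set.mem_ofPred_eq, not_or, not_not] using ht
  have h_apply (w c) : (A + t • C) (s w + (c * t⁻¹) • z) = (F + t • G) (w, c) := by
    simp only [F, G, LinearMap.add_apply, LinearMap.smul_apply, LinearMap.coprod_apply,
      LinearMap.comp_apply, LinearMap.zero_apply, LinearMap.toSpanSingleton_apply, subtype_apply,
      map_add, map_smul, hAs, hz, smul_zero, add_zero, smul_add, smul_smul,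
      inv_mul_cancel_right₀ ht0]
    abel
  have h_range : LinearMap.range (F + t • G) ≤ LinearMap.range (A + t • C) := by
    rintro _ ⟨⟨w, c⟩, rfl⟩
    exact ⟨_, h_apply w c⟩
  refine ⟨t, ?_⟩
  calc A.rank < (finrank K (LinearMap.range A) + 1 : ℕ) := by
        rw [LinearMap.rank, ← finrank_eq_rank]
        exact_mod_cast Nat.lt_succ_self _
    _ = (F + t • G).rank := by
        rw [LinearMap.rank, ← finrank_eq_rank, LinearMap.finrank_range_of_inj h_inj,
          finrank_prod, finrank_self]
    _ ≤ (A + t • C).rank := Submodule.rank_mono h_range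

end Perturbation

theorem apply_mem_orthogonal_range_of_flat {R V W : Type*} [CommSemiring R] [AddCommMonoid V]
    [Module R V] [AddCommMonoid W] [Module R W] {B : LinearMap.BilinForm R W}
    {β : V →ₗ[R] V →ₗ[R] W} (hflat : ∀ X Y Z U, B (β X Y) (β Z U) = B (β X U) (β Y Z))
    {X Z : V} (hZ : β X Z = 0) (Y : V) : β Z Y ∈ B.orthogonal (LinearMap.range (β X)) := by
  rw [LinearMap.BilinForm.mem_orthogonal_iff]
  rintro _ ⟨U, rfl⟩
  calc B (β X U) (β Z Y) = B (β X Z) (β Y U) := (hflat X Z Y U).symm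
    _ = 0 := by rw [hZ, map_zero, LinearMap.zero_apply]

theorem statement3_general {K V W : Type*} [Field K] [Infinite K] [AddCommGroup V] [Module K V]
    [AddCommGroup W] [Module K W] (B : LinearMap.BilinForm K W) (β : V →ₗ[K] V →ₗ[K] W)
    (hsymm : ∀ X Y, β X Y = β Y X)
    (hflat : ∀ X Y Z U, B (β X Y) (β Z U) = B (β X U) (β Y Z))
    (X : V) [FiniteDimensional K (LinearMap.range (β X))]
    (hXreg : ∀ Z, (β Z).rank ≤ (β X).rank) (Z : V) (hZ : β X Z = 0) (Y : V) :
    β Z Y ∈ LinearMap.range (β X) ⊓ B.orthogonal (LinearMap.range (β X)) := by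
  refine ⟨?_, apply_mem_orthogonal_range_of_flat hflat hZ Y⟩
  by_contra h_notMem
  rw [hsymm Z Y] at h_notMem
  obtain ⟨t, ht⟩ := exists_rank_lt_rank_add_smul hZ h_notMem
  rw [← map_smul, ← map_add] at ht
  exact ht.not_ge (hXreg (X + t • Y))

/-- Lemma 2.2, second part. For a flat symmetric bilinear map
`β : V × V → W` into a finite-dimensional space `W` with a nondegenerate symmetric bilinear
form, and for every regular element `X` of `β` (i.e. `dim β(X,V)` maximal), one has
`β(ker β(X), V) ⊆ U(X) = β(X,V) ∩ β(X,V)⊥`: that is, `β(Z,Y) ∈ β(X,V) ∩ β(X,V)⊥` for every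
`Z` with `β(X,Z) = 0` and every `Y ∈ V`. -/
theorem statement3 {V W : Type*} [AddCommGroup V] [Module ℝ V] [FiniteDimensional ℝ V]
    [AddCommGroup W] [Module ℝ W] [FiniteDimensional ℝ W]
    (B : LinearMap.BilinForm ℝ W) (hBsymm : ∀ x y, B x y = B y x) (hBnd : B.Nondegenerate)
    (β : V →ₗ[ℝ] V →ₗ[ℝ] W) (hsymm : ∀ X Y, β X Y = β Y X)
    (hflat : ∀ X Y Z U, B (β X Y) (β Z U) = B (β X U) (β Y Z))
    (X : V)
    (hXreg : ∀ Z, finrank ℝ (LinearMap.range (β Z)) ≤ finrank ℝ (LinearMap.range (β X)))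
    (Z : V) (hZ : β X Z = 0) (Y : V) :
    β Z Y ∈ LinearMap.range (β X) ⊓ B.orthogonal (LinearMap.range (β X)) :=
  statement3_general B β hsymm hflat X
    (fun Z => by simpa only [LinearMap.rank, ← finrank_eq_rank, Nat.cast_le] using hXreg Z) Z hZ Y
end

section
/- Let V and W be finite-dimensional real vector spaces, W with a nondegenerate symmetric bilinear form, and let β : V × V → W be a flat symmetric bilinear map such that β(X,X) ≠ 0 for every X ≠ 0 in V. If dim V > dim W, then there exists Z ≠ 0 in V with β(Z,Z) ∈ S(β) ∩ S(β)⊥; in particular, S(β) is a degenerate subspace of W. -/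
open Module Submodule

/-!
Choose `X` with `β X` of maximal rank and, as `dim W < dim V`, some `Z ≠ 0` with `β X Z = 0`.
If `β Y Z` lay outside the range of `β X`, then for suitable `t ≠ 0` the range of `β (X + t • Y)`
would contain a perturbation of the range of `β X` and the additional direction `β Y Z`,
contradicting maximality. So for each `P` there is `U` with `β P Z = β X U`, and two uses of
flatness give `⟨β P Q, β Z Z⟩ = ⟨β P Z, β Q Z⟩ = ⟨β X U, β Q Z⟩ = ⟨β X Z, β U Q⟩ = 0`.
-/

section MaximalRank

variable {K U V W : Type*} [Field K] [AddCommGroup U] [Module K U] [AddCommGroup V] [Module K V]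
  [AddCommGroup W] [Module K W]

theorem exists_ne_zero_injective_add_smul [Infinite K] [FiniteDimensional K V]
    {f : V →ₗ[K] W} (hf : Function.Injective f) (g : V →ₗ[K] W) :
    ∃ t : K, t ≠ 0 ∧ Function.Injective (f + t • g) := by
  obtain ⟨r, hr⟩ := f.exists_leftInverse_of_injective (LinearMap.ker_eq_bot.2 hf)
  obtain ⟨μ, hμ⟩ := ((End.finite_hasEigenvalue (r ∘ₗ g)).insert 0).exists_notMem
  obtain ⟨hμ0, hμ⟩ : μ ≠ 0 ∧ ¬ End.HasEigenvalue (r ∘ₗ g) μ := by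
    simpa only [Set.mem_insert_iff, Set.mem_ofPred_eq, not_or] using hμ
  -- A kernel vector of `f - μ⁻¹ • g` is fixed by `μ⁻¹ • r ∘ₗ g`.
  refine ⟨-μ⁻¹, neg_ne_zero.2 (inv_ne_zero hμ0), (injective_iff_map_eq_zero _).2 fun x hx => ?_⟩
  have hx' : x - μ⁻¹ • r (g x) = 0 := by
    simpa [← sub_eq_add_neg, show r (f x) = x from LinearMap.congr_fun hr x] using congrArg r hx
  have heigen : (r ∘ₗ g) x = μ • x :=
    ((eq_inv_smul_iff₀ hμ0).1 (sub_eq_zero.1 hx')).symm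
  by_contra hx0
  exact hμ (End.hasEigenvalue_of_hasEigenvector ⟨End.mem_eigenspace_iff.2 heigen, hx0⟩)

theorem exists_finrank_range_lt_finrank_range_add_smul [Infinite K] [FiniteDimensional K W]
    (f g : V →ₗ[K] W) {z : V} (hz : f z = 0) (hgz : g z ∉ LinearMap.range f) :
    ∃ t : K, finrank K (LinearMap.range f) < finrank K (LinearMap.range (f + t • g)) := by
  obtain ⟨s, hs⟩ := f.rangeRestrict.exists_rightInverse_of_surjective f.range_rangeRestrict
  have hfs (r : LinearMap.range f) : f (s r) = r := congrArg Subtype.val (LinearMap.congr_fun hs r)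
  -- For `t ≠ 0`, the map `h + t • p` is `f + t • g` composed with `(r, c) ↦ s r + (t⁻¹ * c) • z`;
  -- unlike that composite, it also makes sense at `t = 0`, where it is injective.
  let h : LinearMap.range f × K →ₗ[K] W :=
    (LinearMap.range f).subtype.coprod (LinearMap.toSpanSingleton K W (g z))
  let p : LinearMap.range f × K →ₗ[K] W := (g ∘ₗ s).coprod 0
  have hinj : Function.Injective h := by
    have hdisj : Disjoint (LinearMap.range (LinearMap.range f).subtype)
        (LinearMap.range (LinearMap.toSpanSingleton K W (g z))) := by
      simpa only [range_subtype, LinearMap.range_toSpanSingleton] using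
        disjoint_span_singleton_of_notMem hgz
    have hgz0 : g z ≠ 0 := fun h0 => hgz (h0 ▸ zero_mem _)
    rw [← LinearMap.ker_eq_bot, LinearMap.ker_coprod_of_disjoint_range _ _ hdisj, ker_subtype,
      LinearMap.ker_toSpanSingleton K hgz0, prod_bot]
  obtain ⟨t, ht0, ht⟩ := exists_ne_zero_injective_add_smul hinj p
  have hle : LinearMap.range (h + t • p) ≤ LinearMap.range (f + t • g) := by
    rintro _ ⟨⟨r, c⟩, rfl⟩
    refine ⟨s r + (t⁻¹ * c) • z, ?_⟩
    calc (f + t • g) (s r + (t⁻¹ * c) • z)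
        = r + c • g z + t • g (s r) := by
          rw [LinearMap.add_apply, LinearMap.smul_apply, map_add f, map_add g, map_smul f,
            map_smul g, hfs, hz, smul_zero, add_zero, smul_add, smul_smul,
            mul_inv_cancel_left₀ ht0]
          abel
      _ = (h + t • p) (r, c) := by simp [h, p]
  refine ⟨t, ?_⟩
  calc finrank K (LinearMap.range f)
      < finrank K (LinearMap.range f × K) := by simp
    _ = finrank K (LinearMap.range (h + t • p)) := (LinearMap.finrank_range_of_inj ht).symm
    _ ≤ finrank K (LinearMap.range (f + t • g)) := finrank_mono hle

/-- `X` is a regular element of the bilinear map `β` if `β X` has the largest rank among all the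
linear maps `β Y`. -/
def IsRegularElement (β : U →ₗ[K] V →ₗ[K] W) (X : U) : Prop :=
  ∀ Y, finrank K (LinearMap.range (β Y)) ≤ finrank K (LinearMap.range (β X))

theorem exists_isRegularElement [FiniteDimensional K W] (β : U →ₗ[K] V →ₗ[K] W) :
    ∃ X, IsRegularElement β X := by
  have hbdd : BddAbove (Set.range fun Y => finrank K (LinearMap.range (β Y))) :=
    ⟨finrank K W, Set.forall_mem_range.2 fun Y => finrank_le _⟩
  obtain ⟨_, ⟨X, rfl⟩, hX⟩ := hbdd.exists_isGreatest_of_nonempty (Set.range_nonempty _)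
  exact ⟨X, Set.forall_mem_range.1 hX⟩

theorem IsRegularElement.apply_mem_range [Infinite K] [FiniteDimensional K W]
    {β : U →ₗ[K] V →ₗ[K] W} {X : U} (hX : IsRegularElement β X) {Z : V} (hZ : β X Z = 0) (Y : U) :
    β Y Z ∈ LinearMap.range (β X) := by
  by_contra hYZ
  obtain ⟨t, ht⟩ := exists_finrank_range_lt_finrank_range_add_smul (β X) (β Y) hZ hYZ
  rw [← map_smul, ← map_add] at ht
  exact (hX (X + t • Y)).not_gt ht

end MaximalRank

section Flat

variable {K V W : Type*} [Field K] [AddCommGroup V] [Module K V] [AddCommGroup W] [Module K W]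

/-- Flatness of the bilinear map `β` with respect to the bilinear form `B`: the Gauss equation for
vanishing curvature, with `β` in the role of the second fundamental form. -/
def IsFlat (B : LinearMap.BilinForm K W) (β : V →ₗ[K] V →ₗ[K] W) : Prop :=
  ∀ X Y Z U, B (β X Y) (β Z U) = B (β X U) (β Y Z)

variable {B : LinearMap.BilinForm K W} {β : V →ₗ[K] V →ₗ[K] W}

theorem IsFlat.apply_self_mem_orthogonal [Infinite K] [FiniteDimensional K W] (hβ : IsFlat B β)
    {X Z : V} (hX : IsRegularElement β X) (hZ : β X Z = 0) :
    β Z Z ∈ B.orthogonal (span K {w | ∃ P Q, β P Q = w}) := by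
  suffices span K {w | ∃ P Q, β P Q = w} ≤ LinearMap.ker (B.flip (β Z Z)) from
    fun w hw => this hw
  rw [span_le]
  rintro _ ⟨P, Q, rfl⟩
  obtain ⟨U, hU⟩ := hX.apply_mem_range hZ P
  calc B (β P Q) (β Z Z)
      = B (β P Z) (β Q Z) := hβ P Q Z Z
    _ = B (β X U) (β Q Z) := by rw [hU]
    _ = B (β X Z) (β U Q) := hβ X U Q Z
    _ = 0 := by rw [hZ, map_zero, LinearMap.zero_apply]

theorem statement4_general [Infinite K] [FiniteDimensional K W] (B : LinearMap.BilinForm K W)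
    (β : V →ₗ[K] V →ₗ[K] W) (hβ : IsFlat B β)
    (hdim : finrank K W < finrank K V) :
    ∃ Z : V, Z ≠ 0 ∧ β Z Z ∈
      (span K {w | ∃ X Y, β X Y = w}) ⊓ B.orthogonal (span K {w | ∃ X Y, β X Y = w}) := by
  have : FiniteDimensional K V := .of_finrank_pos (Nat.zero_lt_of_lt hdim)
  obtain ⟨X, hX⟩ := exists_isRegularElement β
  obtain ⟨Z, hXZ, hZ⟩ :=
    (Submodule.ne_bot_iff _).1 (LinearMap.ker_ne_bot_of_finrank_lt (f := β X) hdim)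
  exact ⟨Z, hZ, subset_span ⟨Z, Z, rfl⟩, hβ.apply_self_mem_orthogonal hX hXZ⟩

end Flat

/-- Let `β : V × V → W` be a flat symmetric bilinear map into a
finite-dimensional space `W` with a nondegenerate symmetric bilinear form, with
`β(X,X) ≠ 0` for every `X ≠ 0`. If `dim V > dim W`, then there is `Z ≠ 0` with
`β(Z,Z) ∈ S(β) ∩ S(β)⊥`; in particular `S(β)` is degenerate. -/
theorem statement4 {V W : Type*} [AddCommGroup V] [Module ℝ V] [FiniteDimensional ℝ V]
    [AddCommGroup W] [Module ℝ W] [FiniteDimensional ℝ W]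
    (B : LinearMap.BilinForm ℝ W) (hBsymm : ∀ x y, B x y = B y x) (hBnd : B.Nondegenerate)
    (β : V →ₗ[ℝ] V →ₗ[ℝ] W) (hsymm : ∀ X Y, β X Y = β Y X)
    (hflat : ∀ X Y Z U, B (β X Y) (β Z U) = B (β X U) (β Y Z))
    (hne : ∀ X : V, X ≠ 0 → β X X ≠ 0)
    (hdim : finrank ℝ W < finrank ℝ V) :
    (∃ Z : V, Z ≠ 0 ∧ β Z Z ∈
        (span ℝ {w | ∃ X Y, β X Y = w}) ⊓ B.orthogonal (span ℝ {w | ∃ X Y, β X Y = w})) ∧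
    (span ℝ {w | ∃ X Y, β X Y = w}) ⊓ B.orthogonal (span ℝ {w | ∃ X Y, β X Y = w}) ≠ ⊥ := by
  obtain ⟨Z, hZ, hmem⟩ := statement4_general B β hflat hdim
  exact ⟨⟨Z, hZ, hmem⟩, (Submodule.ne_bot_iff _).2 ⟨β Z Z, hmem, hne Z hZ⟩⟩
end

section
/- Let V be a real vector space and L a real vector space with a symmetric bilinear form ⟨·,·⟩. Let ω : V × V → L be a symmetric bilinear map and let K assign to each X ∈ V a linear map K(X) : L → L, such that: (i) K(X)ω(Y,Z) = K(Y)ω(X,Z) for all X, Y, Z ∈ V; and (ii) ⟨K(X)ω(Y,Z), ω(W,U)⟩ = −⟨ω(Y,Z), K(X)ω(W,U)⟩ for all X, Y, Z, W, U ∈ V. Then ⟨K(X)ω(Y,Z), ω(W,U)⟩ = 0 for all X, Y, Z, W, U ∈ V. -/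
/-!
Write `T(X, Y, Z | W, U) = ⟨K(X)ω(Y, Z), ω(W, U)⟩`, which is symmetric in its first three arguments.
For fixed vectors, `T` labels the `2`-element subsets `{W, U}` of a `5`-element set. The skewness of
`K(X)` says that disjoint subsets carry opposite labels, i.e. that labels change sign along the
edges of the Petersen graph. That graph contains a `5`-cycle, and going once around this odd cycle
shows that each label equals its own negative.
-/

theorem apply_eq_neg_self_of_symm_of_skew {V M : Type*} [InvolutiveNeg M]
    {T : V → V → V → V → V → M}
    (swap_fst_snd : ∀ X Y Z W U, T X Y Z W U = T Y X Z W U)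
    (swap_snd_trd : ∀ X Y Z W U, T X Y Z W U = T X Z Y W U)
    (skew : ∀ X Y Z W U, T X Y Z W U = -T X W U Y Z) (X Y Z W U : V) :
    T X Y Z W U = -T X Y Z W U := by
  have rotate (X Y Z W U : V) : T X Y Z W U = T Y Z X W U := by
    rw [swap_fst_snd, swap_snd_trd]
  -- The last two arguments trace the `5`-cycle `WU, YZ, XU, ZW, XY` in the Petersen graph.
  calc
    T X Y Z W U = -T X W U Y Z := skew ..
    _ = -T W X U Y Z := by rw [swap_fst_snd]
    _ = T W Y Z X U := by rw [skew W X U, neg_neg]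
    _ = T Y Z W X U := rotate ..
    _ = -T Y X U Z W := skew ..
    _ = -T U Y X Z W := by rw [rotate U]
    _ = -T U X Y Z W := by rw [swap_snd_trd]
    _ = T U Z W X Y := by rw [skew U X Y, neg_neg]
    _ = T Z W U X Y := rotate ..
    _ = -T Z X Y W U := skew ..
    _ = -T X Y Z W U := by rw [rotate Z]

theorem eq_zero_of_eq_neg_self {M : Type*} [AddGroup M] (two_regular : IsSMulRegular M (2 : ℕ))
    {m : M} (hm : m = -m) : m = 0 :=
  two_regular.right_eq_zero_of_smul <| by rw [two_nsmul, ← eq_neg_iff_add_eq_zero, ← hm]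

theorem statement7_general {V L M : Type*} [AddGroup M] (two_regular : IsSMulRegular M (2 : ℕ))
    (B : L → L → M) (B_symm : ∀ x y, B x y = B y x)
    (ω : V → V → L) (ω_symm : ∀ X Y, ω X Y = ω Y X)
    (K : V → L → L)
    (K_ω_swap : ∀ X Y Z, K X (ω Y Z) = K Y (ω X Z))
    (K_skew : ∀ X Y Z W U, B (K X (ω Y Z)) (ω W U) = -B (ω Y Z) (K X (ω W U)))
    (X Y Z W U : V) : B (K X (ω Y Z)) (ω W U) = 0 := by
  have skew (X Y Z W U : V) : B (K X (ω Y Z)) (ω W U) = -B (K X (ω W U)) (ω Y Z) := by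
    rw [K_skew, B_symm]
  exact eq_zero_of_eq_neg_self two_regular <|
    apply_eq_neg_self_of_symm_of_skew (T := fun X Y Z W U ↦ B (K X (ω Y Z)) (ω W U))
      (fun X Y Z _ _ ↦ by rw [K_ω_swap X Y Z])
      (fun _ Y Z _ _ ↦ by rw [ω_symm Y Z]) skew X Y Z W U

/-- the algebraic identity in the proof of Lemma 2.11. Let `ω : V × V → L`
be a symmetric bilinear map into a space `L` with a symmetric bilinear form, and let `K`
assign to each `X ∈ V` an endomorphism `K(X)` of `L` such that `K(X)ω(Y,Z) = K(Y)ω(X,Z)` and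
`⟨K(X)ω(Y,Z), ω(W,U)⟩ = -⟨ω(Y,Z), K(X)ω(W,U)⟩` for all arguments. Then
`⟨K(X)ω(Y,Z), ω(W,U)⟩ = 0` for all `X, Y, Z, W, U ∈ V`. -/
theorem statement7 {V L : Type*} [AddCommGroup V] [Module ℝ V] [AddCommGroup L] [Module ℝ L]
    (B : LinearMap.BilinForm ℝ L) (hBsymm : ∀ x y, B x y = B y x)
    (ω : V →ₗ[ℝ] V →ₗ[ℝ] L) (hsymm : ∀ X Y, ω X Y = ω Y X)
    (K : V → L →ₗ[ℝ] L)
    (h1 : ∀ X Y Z, K X (ω Y Z) = K Y (ω X Z))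
    (h2 : ∀ X Y Z W' U, B (K X (ω Y Z)) (ω W' U) = -B (ω Y Z) (K X (ω W' U))) :
    ∀ X Y Z W' U, B (K X (ω Y Z)) (ω W' U) = 0 :=
  statement7_general (.of_ne_zero two_ne_zero) (B · ·) hBsymm (ω · ·) hsymm (K · ·) h1 h2
end
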